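/- For any EUF formula F that is in negation-normal form, there is a parsing of F as a PEUF p-formula in which every function symbol of F_g is classified as a g-function symbol and every function symbol of F_p is classified as a p-function symbol. -/

import Mathlib

mutual
inductive EufTerm (Fn Pr : Type) : Type
  | app : Fn → List (EufTerm Fn Pr) → EufTerm Fn Pr
  | ite : EufFormula Fn Pr → EufTerm Fn Pr → EufTerm Fn Pr → EufTerm Fn Pr
inductive EufFormula (Fn Pr : Type) : Type
  | tt : EufFormula Fn Pr
  | ff : EufFormula Fn Pr
  | not : EufFormula Fn Pr → EufFormula Fn Pr
  | and : EufFormula Fn Pr → EufFormula Fn Pr → EufFormula Fn Pr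
  | or : EufFormula Fn Pr → EufFormula Fn Pr → EufFormula Fn Pr
  | eq : EufTerm Fn Pr → EufTerm Fn Pr → EufFormula Fn Pr
  | papp : Pr → List (EufTerm Fn Pr) → EufFormula Fn Pr
end

structure Interp (Fn Pr : Type) (D : Type u) where
  fn : Fn → List D → D
  pr : Pr → List D → Bool

open Classical in
mutual
noncomputable def evalT {Fn Pr : Type} {D : Type} (I : Interp Fn Pr D) : EufTerm Fn Pr → D
  | .app f args => I.fn f (args.attach.map (fun t => evalT I t.1))
  | .ite G T1 T2 => if evalF I G then evalT I T1 else evalT I T2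
termination_by t => sizeOf t
decreasing_by
  all_goals simp_wf
  all_goals try omega
  all_goals (have := List.sizeOf_lt_of_mem t.2; omega)
noncomputable def evalF {Fn Pr : Type} {D : Type} (I : Interp Fn Pr D) : EufFormula Fn Pr → Bool
  | .tt => true
  | .ff => false
  | .not G => !evalF I G
  | .and G1 G2 => evalF I G1 && evalF I G2
  | .or G1 G2 => evalF I G1 || evalF I G2
  | .eq T1 T2 => decide (evalT I T1 = evalT I T2)
  | .papp p args => I.pr p (args.attach.map (fun t => evalT I t.1))
termination_by g => sizeOf g
decreasing_by
  all_goals simp_wf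
  all_goals try omega
  all_goals (have := List.sizeOf_lt_of_mem t.2; omega)
end
def ValidOn {Fn Pr : Type} (F : EufFormula Fn Pr) (D : Type) : Prop :=
  ∀ I : Interp Fn Pr D, evalF I F = true

def UniversallyValid {Fn Pr : Type} (F : EufFormula Fn Pr) : Prop :=
  ∀ D : Type, Nonempty D → ValidOn F D

/-- Expressions: terms or formulas. -/
inductive EufExpr (Fn Pr : Type) : Type
  | t : EufTerm Fn Pr → EufExpr Fn Pr
  | f : EufFormula Fn Pr → EufExpr Fn Pr

/-- Immediate (proper) subexpression relation. -/
inductive ImmSub {Fn Pr : Type} : EufExpr Fn Pr → EufExpr Fn Pr → Prop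
  | appArg {g : Fn} {args : List (EufTerm Fn Pr)} {T : EufTerm Fn Pr} :
      T ∈ args → ImmSub (.t T) (.t (.app g args))
  | iteC {G : EufFormula Fn Pr} {T1 T2 : EufTerm Fn Pr} : ImmSub (.f G) (.t (.ite G T1 T2))
  | ite1 {G : EufFormula Fn Pr} {T1 T2 : EufTerm Fn Pr} : ImmSub (.t T1) (.t (.ite G T1 T2))
  | ite2 {G : EufFormula Fn Pr} {T1 T2 : EufTerm Fn Pr} : ImmSub (.t T2) (.t (.ite G T1 T2))
  | not {G : EufFormula Fn Pr} : ImmSub (.f G) (.f (.not G))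
  | andL {G1 G2 : EufFormula Fn Pr} : ImmSub (.f G1) (.f (.and G1 G2))
  | andR {G1 G2 : EufFormula Fn Pr} : ImmSub (.f G2) (.f (.and G1 G2))
  | orL {G1 G2 : EufFormula Fn Pr} : ImmSub (.f G1) (.f (.or G1 G2))
  | orR {G1 G2 : EufFormula Fn Pr} : ImmSub (.f G2) (.f (.or G1 G2))
  | eqL {T1 T2 : EufTerm Fn Pr} : ImmSub (.t T1) (.f (.eq T1 T2))
  | eqR {T1 T2 : EufTerm Fn Pr} : ImmSub (.t T2) (.f (.eq T1 T2))
  | pappArg {p : Pr} {args : List (EufTerm Fn Pr)} {T : EufTerm Fn Pr} :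
      T ∈ args → ImmSub (.t T) (.f (.papp p args))

/-- `SubExpr a b`: `a` occurs (as a subexpression) in `b`. -/
def SubExpr {Fn Pr : Type} (a b : EufExpr Fn Pr) : Prop := Relation.ReflTransGen ImmSub a b

def TermInT {Fn Pr : Type} (T S : EufTerm Fn Pr) : Prop := SubExpr (.t T) (.t S)
def TermInF {Fn Pr : Type} (T : EufTerm Fn Pr) (F : EufFormula Fn Pr) : Prop :=
  SubExpr (.t T) (.f F)
def FormulaInT {Fn Pr : Type} (G : EufFormula Fn Pr) (S : EufTerm Fn Pr) : Prop :=
  SubExpr (.f G) (.t S)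
def FormulaInF {Fn Pr : Type} (G F : EufFormula Fn Pr) : Prop := SubExpr (.f G) (.f F)

def IsAppTerm {Fn Pr : Type} : EufTerm Fn Pr → Prop
  | .app _ _ => True
  | _ => False

/-- `𝒯(F)`: the function application terms occurring in `F`. -/
def AppTermsF {Fn Pr : Type} (F : EufFormula Fn Pr) : Set (EufTerm Fn Pr) :=
  {T | IsAppTerm T ∧ TermInF T F}

/-- A function symbol occurs in `F` when some application of it occurs in `F`. -/
def FnInF {Fn Pr : Type} (g : Fn) (F : EufFormula Fn Pr) : Prop :=
  ∃ args, TermInF (EufTerm.app g args) F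

def PrInF {Fn Pr : Type} (p : Pr) (F : EufFormula Fn Pr) : Prop :=
  ∃ args, FormulaInF (EufFormula.papp p args) F

/-- `I` is diverse for `F` with respect to the set `Sg` of function symbols. -/
def DiverseFor {Fn Pr D : Type} (I : Interp Fn Pr D) (F : EufFormula Fn Pr)
    (Sg : Set Fn) : Prop :=
  ∀ (g : Fn) (args : List (EufTerm Fn Pr)), g ∈ Sg →
    TermInF (EufTerm.app g args) F →
    ∀ T2 ∈ AppTermsF F, evalT I (EufTerm.app g args) = evalT I T2 →
      ∃ args2, T2 = EufTerm.app g args2 ∧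
        List.Forall₂ (fun a b => evalT I a = evalT I b) args args2

mutual
/-- PEUF g-terms, where `isP` designates the p-function symbols. -/
inductive IsGTerm {Fn Pr : Type} (isP : Fn → Prop) : EufTerm Fn Pr → Prop
  | ite {G : EufFormula Fn Pr} {T1 T2 : EufTerm Fn Pr} :
      IsGFormula isP G → IsGTerm isP T1 → IsGTerm isP T2 → IsGTerm isP (.ite G T1 T2)
  | app {g : Fn} {args : List (EufTerm Fn Pr)} :
      ¬ isP g → (∀ T ∈ args, IsPTerm isP T) → IsGTerm isP (.app g args)
/-- PEUF p-terms. -/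
inductive IsPTerm {Fn Pr : Type} (isP : Fn → Prop) : EufTerm Fn Pr → Prop
  | g {T : EufTerm Fn Pr} : IsGTerm isP T → IsPTerm isP T
  | ite {G : EufFormula Fn Pr} {T1 T2 : EufTerm Fn Pr} :
      IsGFormula isP G → IsPTerm isP T1 → IsPTerm isP T2 → IsPTerm isP (.ite G T1 T2)
  | app {g : Fn} {args : List (EufTerm Fn Pr)} :
      isP g → (∀ T ∈ args, IsPTerm isP T) → IsPTerm isP (.app g args)
/-- PEUF g-formulas. -/
inductive IsGFormula {Fn Pr : Type} (isP : Fn → Prop) : EufFormula Fn Pr → Prop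
  | tt : IsGFormula isP .tt
  | ff : IsGFormula isP .ff
  | not {G : EufFormula Fn Pr} : IsGFormula isP G → IsGFormula isP (.not G)
  | and {G1 G2 : EufFormula Fn Pr} :
      IsGFormula isP G1 → IsGFormula isP G2 → IsGFormula isP (.and G1 G2)
  | or {G1 G2 : EufFormula Fn Pr} :
      IsGFormula isP G1 → IsGFormula isP G2 → IsGFormula isP (.or G1 G2)
  | eq {T1 T2 : EufTerm Fn Pr} :
      IsGTerm isP T1 → IsGTerm isP T2 → IsGFormula isP (.eq T1 T2)
  | papp {p : Pr} {args : List (EufTerm Fn Pr)} :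
      (∀ T ∈ args, IsPTerm isP T) → IsGFormula isP (.papp p args)
/-- PEUF p-formulas. -/
inductive IsPFormula {Fn Pr : Type} (isP : Fn → Prop) : EufFormula Fn Pr → Prop
  | g {G : EufFormula Fn Pr} : IsGFormula isP G → IsPFormula isP G
  | and {G1 G2 : EufFormula Fn Pr} :
      IsPFormula isP G1 → IsPFormula isP G2 → IsPFormula isP (.and G1 G2)
  | or {G1 G2 : EufFormula Fn Pr} :
      IsPFormula isP G1 → IsPFormula isP G2 → IsPFormula isP (.or G1 G2)
  | eq {T1 T2 : EufTerm Fn Pr} :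
      IsPTerm isP T1 → IsPTerm isP T2 → IsPFormula isP (.eq T1 T2)
end

/-- The p-function symbols occurring in `F`. -/
def PSymbolsIn {Fn Pr : Type} (isP : Fn → Prop) (F : EufFormula Fn Pr) : Set Fn :=
  {g | isP g ∧ FnInF g F}

/-- `I` is maximally diverse for the p-formula `F`. -/
def MaxDiverse {Fn Pr D : Type} (isP : Fn → Prop) (I : Interp Fn Pr D)
    (F : EufFormula Fn Pr) : Prop :=
  DiverseFor I F (PSymbolsIn isP F)

/-- `I'` refines `I` on the term set `Ts`. -/
def RefinesOn {Fn Pr D D' : Type} (I' : Interp Fn Pr D') (I : Interp Fn Pr D)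
    (Ts : Set (EufTerm Fn Pr)) : Prop :=
  ∀ T1 ∈ Ts, ∀ T2 ∈ Ts, evalT I' T1 = evalT I' T2 → evalT I T1 = evalT I T2

def ProperRefinesOn {Fn Pr D D' : Type} (I' : Interp Fn Pr D') (I : Interp Fn Pr D)
    (Ts : Set (EufTerm Fn Pr)) : Prop :=
  RefinesOn I' I Ts ∧
    ∃ T1 ∈ Ts, ∃ T2 ∈ Ts, evalT I T1 = evalT I T2 ∧ evalT I' T1 ≠ evalT I' T2
mutual
/-- Negation-normal form (terms): negation applied only to equations and predicate
applications, everywhere in the expression. -/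
inductive NNFT {Fn Pr : Type} : EufTerm Fn Pr → Prop
  | app {g : Fn} {args : List (EufTerm Fn Pr)} :
      (∀ T ∈ args, NNFT T) → NNFT (.app g args)
  | ite {G : EufFormula Fn Pr} {T1 T2 : EufTerm Fn Pr} :
      NNFF G → NNFT T1 → NNFT T2 → NNFT (.ite G T1 T2)
/-- Negation-normal form (formulas). -/
inductive NNFF {Fn Pr : Type} : EufFormula Fn Pr → Prop
  | tt : NNFF .tt
  | ff : NNFF .ff
  | and {G1 G2 : EufFormula Fn Pr} : NNFF G1 → NNFF G2 → NNFF (.and G1 G2)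
  | or {G1 G2 : EufFormula Fn Pr} : NNFF G1 → NNFF G2 → NNFF (.or G1 G2)
  | eq {T1 T2 : EufTerm Fn Pr} : NNFT T1 → NNFT T2 → NNFF (.eq T1 T2)
  | papp {p : Pr} {args : List (EufTerm Fn Pr)} :
      (∀ T ∈ args, NNFT T) → NNFF (.papp p args)
  | notEq {T1 T2 : EufTerm Fn Pr} : NNFT T1 → NNFT T2 → NNFF (.not (.eq T1 T2))
  | notPapp {p : Pr} {args : List (EufTerm Fn Pr)} :
      (∀ T ∈ args, NNFT T) → NNFF (.not (.papp p args))
end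

/-- `Φ⁻`: the negative formulas of `F0`. -/
inductive NegFormula {Fn Pr : Type} (F0 : EufFormula Fn Pr) : EufFormula Fn Pr → Prop
  | ofNot {G : EufFormula Fn Pr} : FormulaInF (.not G) F0 → NegFormula F0 G
  | ofIte {G : EufFormula Fn Pr} {T1 T2 : EufTerm Fn Pr} :
      TermInF (.ite G T1 T2) F0 → NegFormula F0 G
  | andL {G1 G2 : EufFormula Fn Pr} : NegFormula F0 (.and G1 G2) → NegFormula F0 G1
  | andR {G1 G2 : EufFormula Fn Pr} : NegFormula F0 (.and G1 G2) → NegFormula F0 G2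
  | orL {G1 G2 : EufFormula Fn Pr} : NegFormula F0 (.or G1 G2) → NegFormula F0 G1
  | orR {G1 G2 : EufFormula Fn Pr} : NegFormula F0 (.or G1 G2) → NegFormula F0 G2

/-- `Θ⁻`: the negative terms of `F0`. -/
inductive NegTerm {Fn Pr : Type} (F0 : EufFormula Fn Pr) : EufTerm Fn Pr → Prop
  | eqL {T1 T2 : EufTerm Fn Pr} : NegFormula F0 (.eq T1 T2) → NegTerm F0 T1
  | eqR {T1 T2 : EufTerm Fn Pr} : NegFormula F0 (.eq T1 T2) → NegTerm F0 T2
  | ite1 {G : EufFormula Fn Pr} {T1 T2 : EufTerm Fn Pr} :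
      NegTerm F0 (.ite G T1 T2) → NegTerm F0 T1
  | ite2 {G : EufFormula Fn Pr} {T1 T2 : EufTerm Fn Pr} :
      NegTerm F0 (.ite G T1 T2) → NegTerm F0 T2

/-!
Every position where the PEUF grammar demands a g-formula is the body of a negation, the guard of
an `ITE`, or inherits the demand from an enclosing conjunction, disjunction or negation; these are
the rules generating `Φ⁻`. Likewise g-terms are demanded only at sides of equations in `Φ⁻` and
at branches of `ITE` terms in `Θ⁻`. Hence, by induction on the subexpressions of `F`, each one
parses in its p-class and each negative one also in its g-class. The partition of the
function symbols matters only at an application in `Θ⁻`, whose head must be a g-function symbol.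
-/

/-- The set `F_g` of function symbols heading an application in `Θ⁻`. -/
def negFnSymbols {Fn Pr : Type} (F : EufFormula Fn Pr) : Set Fn :=
  {g | ∃ args, NegTerm F (.app g args)}

/-- The invariant of the induction over the subexpressions of `F`: the expression parses in its
p-class and, when it is negative in `F`, also in its g-class. -/
def ParsesIn {Fn Pr : Type} (isP : Fn → Prop) (F : EufFormula Fn Pr) : EufExpr Fn Pr → Prop
  | .t T => IsPTerm isP T ∧ (NegTerm F T → IsGTerm isP T)
  | .f G => IsPFormula isP G ∧ (NegFormula F G → IsGFormula isP G)

section Subexpressions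

variable {Fn Pr : Type}

theorem ImmSub.sizeOf_lt {a b : EufExpr Fn Pr} (h : ImmSub a b) : sizeOf a < sizeOf b := by
  cases h with
  | appArg hT | pappArg hT =>
    have := List.sizeOf_lt_of_mem hT
    simp only [EufExpr.t.sizeOf_spec, EufExpr.f.sizeOf_spec, EufTerm.app.sizeOf_spec,
      EufFormula.papp.sizeOf_spec]
    omega
  | _ => simp +arith

theorem ImmSub.wellFounded : WellFounded (ImmSub (Fn := Fn) (Pr := Pr)) :=
  Subrelation.wf ImmSub.sizeOf_lt (measure sizeOf).wf

theorem SubExpr.induction {c e : EufExpr Fn Pr} {motive : EufExpr Fn Pr → Prop}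
    (step : ∀ b, SubExpr b c → (∀ a, ImmSub a b → motive a) → motive b) (h : SubExpr e c) :
    motive e := by
  induction e using ImmSub.wellFounded.induction with
  | _ b ih => exact step b h fun a hab => ih a hab (.head hab h)

end Subexpressions

section Parsing

variable {Fn Pr : Type} {isP : Fn → Prop} {F G G₁ G₂ : EufFormula Fn Pr}
  {T₁ T₂ : EufTerm Fn Pr} {args : List (EufTerm Fn Pr)}

theorem IsPTerm.app_of_args (g : Fn) (hargs : ∀ T ∈ args, IsPTerm isP T) :
    IsPTerm isP (.app g args) := by
  by_cases hg : isP g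
  · exact .app hg hargs
  · exact .g (.app hg hargs)

namespace ParsesIn

theorem app {g : Fn} (hisP : ∀ g ∈ negFnSymbols F, ¬ isP g)
    (hargs : ∀ T ∈ args, ParsesIn isP F (.t T)) : ParsesIn isP F (.t (.app g args)) :=
  have hargs' : ∀ T ∈ args, IsPTerm isP T := fun T hT => (hargs T hT).1
  ⟨.app_of_args g hargs', fun hneg => .app (hisP g ⟨args, hneg⟩) hargs'⟩

theorem ite (hocc : TermInF (.ite G T₁ T₂) F) (hG : ParsesIn isP F (.f G))
    (h₁ : ParsesIn isP F (.t T₁)) (h₂ : ParsesIn isP F (.t T₂)) :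
    ParsesIn isP F (.t (.ite G T₁ T₂)) :=
  have hguard : IsGFormula isP G := hG.2 (.ofIte hocc)
  ⟨.ite hguard h₁.1 h₂.1, fun hneg => .ite hguard (h₁.2 (.ite1 hneg)) (h₂.2 (.ite2 hneg))⟩

theorem of_isGFormula (hG : IsGFormula isP G) : ParsesIn isP F (.f G) :=
  ⟨.g hG, fun _ => hG⟩

theorem not (hocc : FormulaInF (.not G) F) (hG : ParsesIn isP F (.f G)) :
    ParsesIn isP F (.f (.not G)) :=
  of_isGFormula (.not (hG.2 (.ofNot hocc)))

theorem and (h₁ : ParsesIn isP F (.f G₁)) (h₂ : ParsesIn isP F (.f G₂)) :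
    ParsesIn isP F (.f (.and G₁ G₂)) :=
  ⟨.and h₁.1 h₂.1, fun hneg => .and (h₁.2 (.andL hneg)) (h₂.2 (.andR hneg))⟩

theorem or (h₁ : ParsesIn isP F (.f G₁)) (h₂ : ParsesIn isP F (.f G₂)) :
    ParsesIn isP F (.f (.or G₁ G₂)) :=
  ⟨.or h₁.1 h₂.1, fun hneg => .or (h₁.2 (.orL hneg)) (h₂.2 (.orR hneg))⟩

theorem eq (h₁ : ParsesIn isP F (.t T₁)) (h₂ : ParsesIn isP F (.t T₂)) :
    ParsesIn isP F (.f (.eq T₁ T₂)) :=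
  ⟨.eq h₁.1 h₂.1, fun hneg => .eq (h₁.2 (.eqL hneg)) (h₂.2 (.eqR hneg))⟩

theorem papp {p : Pr} (hargs : ∀ T ∈ args, ParsesIn isP F (.t T)) :
    ParsesIn isP F (.f (.papp p args)) :=
  of_isGFormula (.papp fun T hT => (hargs T hT).1)

theorem of_immSub (hisP : ∀ g ∈ negFnSymbols F, ¬ isP g) :
    ∀ e : EufExpr Fn Pr, SubExpr e (.f F) → (∀ a, ImmSub a e → ParsesIn isP F a) →
      ParsesIn isP F e
  | .t (.app _ _), _, ih => .app hisP fun T hT => ih (.t T) (.appArg hT)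
  | .t (.ite _ _ _), hocc, ih => .ite hocc (ih _ .iteC) (ih _ .ite1) (ih _ .ite2)
  | .f .tt, _, _ => of_isGFormula .tt
  | .f .ff, _, _ => of_isGFormula .ff
  | .f (.not _), hocc, ih => .not hocc (ih _ .not)
  | .f (.and _ _), _, ih => .and (ih _ .andL) (ih _ .andR)
  | .f (.or _ _), _, ih => .or (ih _ .orL) (ih _ .orR)
  | .f (.eq _ _), _, ih => .eq (ih _ .eqL) (ih _ .eqR)
  | .f (.papp _ _), _, ih => .papp fun T hT => ih (.t T) (.pappArg hT)

theorem of_subExpr {e : EufExpr Fn Pr} (hisP : ∀ g ∈ negFnSymbols F, ¬ isP g)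
    (he : SubExpr e (.f F)) : ParsesIn isP F e :=
  he.induction (of_immSub hisP)

end ParsesIn

end Parsing

theorem peuf_extraction_general {Fn Pr : Type} (F : EufFormula Fn Pr) (isP : Fn → Prop)
    (hisP : ∀ g ∈ negFnSymbols F, ¬ isP g) : IsPFormula isP F :=
  (ParsesIn.of_subExpr hisP (e := .f F) .refl).1

/-- Any negation-normal EUF formula `F` can be parsed as a PEUF p-formula
in which the function symbols with an application in `Θ⁻` (the set `F_g`) are the g-function
symbols and all remaining function symbols (the set `F_p`) are the p-function symbols. -/
theorem peuf_extraction {Fn Pr : Type} (F : EufFormula Fn Pr) (hnnf : NNFF F) :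
    IsPFormula (fun g => ¬ ∃ args, NegTerm F (EufTerm.app g args)) F := by
  exact peuf_extraction_general F _ fun _ hg => not_not_intro hg
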